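/- arXiv:1907.08163 — 4 statements merged into one kernel-verified Lean document; each statement's English description precedes it below -/
import Mathlib

section
/- Let Λ be a finite nonempty set and let M be a measurable space of measurements with a function f : Λ × M → [0,1] that is measurable in its second argument. A preparation is a probability distribution q : Λ → [0,1] with Σ_λ q(λ) = 1, and it induces the function g_q : M → [0,1], g_q(E) = Σ_{λ∈Λ} q(λ)·f(λ,E). Then there exists a universal constant K > 0 such that the following holds. Let D be a probability measure on M, p a preparation (the target), ε, δ ∈ (0,1), and γ > η > 0. If m ≥ (K/ε)·( (log₂|Λ|/(γ−η)²)·log²( log₂|Λ| / ((γ−η)·ε) ) + log(1/δ) ), then with probability at least 1 − δ over E₁,…,E_m drawn i.i.d. from D, every preparation q satisfying |g_q(E_i) − g_p(E_i)| ≤ η for all i ∈ {1,…,m} also satisfies Pr_{E∼D}[ |g_q(E) − g_p(E)| > γ ] ≤ ε. -/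
open MeasureTheory

/-- A preparation on a finite ontic state space `Λ` is a probability distribution
`q : Λ → ℝ` (nonnegative, summing to 1). -/
def IsPreparation {Λ : Type} [Fintype Λ] (q : Λ → ℝ) : Prop :=
  (∀ l : Λ, 0 ≤ q l) ∧ ∑ l : Λ, q l = 1

/-- The function induced on measurements by a preparation `q` of an ontological model with
outcome probabilities `f : Λ × M → [0,1]`:  `g_q(E) = Σ_λ q(λ)·f(λ,E)`. -/
noncomputable def prepFun {Λ M : Type} [Fintype Λ] (f : Λ → M → ℝ) (q : Λ → ℝ) :
    M → ℝ := fun E => ∑ l : Λ, q l * f l E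

/-!
Draw `k` ontic states independently from a preparation `q`. By Hoeffding's inequality the average
of their outcome functions is uniformly likely to be close to `g_q` at every measurement, so by
Fubini some `k`-tuple works simultaneously at all sample points and on most of `D`. This replaces
the infinite class of preparations by at most `|Λ| ^ k` empirical means, where `k` is of order
`log (m / ε) / (γ - η)²`, and the union bound over a finite class applies.

With at most two ontic states this is not enough, since the factor `log²` may vanish; but then
every `g_q - g_p` is a multiple of one fixed function, whose superlevel sets form a chain, and a
chain of events costs no more than a single one.
-/

open ProbabilityTheory

lemma one_sub_le_measure_of_compl_subset {Ω : Type*} [MeasurableSpace Ω] {μ : Measure Ω}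
    [IsProbabilityMeasure μ] {B S : Set Ω} {c : ENNReal} (hB : μ B ≤ c) (hBS : Bᶜ ⊆ S) :
    1 - c ≤ μ S := by
  rw [tsub_le_iff_left, ← measure_univ (μ := μ)]
  calc μ Set.univ ≤ μ B + μ Bᶜ := measure_univ_le_add_compl B
    _ ≤ c + μ S := by gcongr

section MissedEvents

variable {ι M : Type*} [Fintype ι] [MeasurableSpace M] {D : Measure M} [IsProbabilityMeasure D]
  {e : ℝ}

lemma measure_pi_forall_notMem_le {A : Set M} (hA : MeasurableSet A)
    (he : ENNReal.ofReal e ≤ D A) :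
    Measure.pi (fun _ : ι => D) {Es | ∀ i, Es i ∉ A}
      ≤ ENNReal.ofReal (Real.exp (-(e * Fintype.card ι))) := by
  have avoid_eq_pi : {Es : ι → M | ∀ i, Es i ∉ A} = Set.univ.pi fun _ => Aᶜ := by
    ext; simp [Set.mem_pi]
  have compl_le : D Aᶜ ≤ ENNReal.ofReal (Real.exp (-e)) :=
    calc D Aᶜ ≤ 1 - ENNReal.ofReal e := prob_compl_le_one_sub_of_le_prob he hA
      _ ≤ ENNReal.ofReal (Real.exp (-e)) := by
        rw [tsub_le_iff_right, ← ENNReal.ofReal_one]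
        refine le_trans (ENNReal.ofReal_le_ofReal ?_) ENNReal.ofReal_add_le
        linarith [Real.add_one_le_exp (-e)]
  calc Measure.pi (fun _ : ι => D) {Es | ∀ i, Es i ∉ A}
      = D Aᶜ ^ Fintype.card ι := by
        rw [avoid_eq_pi, Measure.pi_pi, Finset.prod_const, Finset.card_univ]
    _ ≤ ENNReal.ofReal (Real.exp (-e)) ^ Fintype.card ι := by gcongr
    _ = ENNReal.ofReal (Real.exp (-(e * Fintype.card ι))) := by
        rw [← ENNReal.ofReal_pow (Real.exp_pos _).le, ← Real.exp_nat_mul]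
        congr 2
        ring

lemma measure_pi_exists_forall_notMem_le_card_mul {α : Type*} [Fintype α] {A : α → Set M}
    (hA : ∀ a, MeasurableSet (A a)) :
    Measure.pi (fun _ : ι => D) {Es | ∃ a, ENNReal.ofReal e ≤ D (A a) ∧ ∀ i, Es i ∉ A a}
      ≤ Fintype.card α * ENNReal.ofReal (Real.exp (-(e * Fintype.card ι))) := by
  calc Measure.pi (fun _ : ι => D) {Es | ∃ a, ENNReal.ofReal e ≤ D (A a) ∧ ∀ i, Es i ∉ A a}
      = Measure.pi (fun _ : ι => D)
          (⋃ a, {Es | ENNReal.ofReal e ≤ D (A a) ∧ ∀ i, Es i ∉ A a}) := by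
        rw [Set.ofPred_exists]
    _ ≤ ∑ a, Measure.pi (fun _ : ι => D) {Es | ENNReal.ofReal e ≤ D (A a) ∧ ∀ i, Es i ∉ A a} :=
        measure_iUnion_fintype_le _ _
    _ ≤ ∑ _a : α, ENNReal.ofReal (Real.exp (-(e * Fintype.card ι))) := by
        gcongr with a
        by_cases he : ENNReal.ofReal e ≤ D (A a)
        · simpa only [he, true_and] using measure_pi_forall_notMem_le (hA a) he
        · simp [he]
    _ = Fintype.card α * ENNReal.ofReal (Real.exp (-(e * Fintype.card ι))) := by simp

lemma measure_pi_exists_forall_notMem_le_of_antitone {α : Type*} [LinearOrder α] [Countable α]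
    {A : α → Set M} (hA : ∀ a, MeasurableSet (A a)) (hanti : Antitone A) :
    Measure.pi (fun _ : ι => D) {Es | ∃ a, ENNReal.ofReal e ≤ D (A a) ∧ ∀ i, Es i ∉ A a}
      ≤ ENNReal.ofReal (Real.exp (-(e * Fintype.card ι))) := by
  have union_eq : {Es : ι → M | ∃ a, ENNReal.ofReal e ≤ D (A a) ∧ ∀ i, Es i ∉ A a}
      = ⋃ a : {a // ENNReal.ofReal e ≤ D (A a)}, {Es | ∀ i, Es i ∉ A a} := by
    ext; simp
  have avoid_mono :
      Monotone fun a : {a // ENNReal.ofReal e ≤ D (A a)} => {Es : ι → M | ∀ i, Es i ∉ A a} :=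
    fun _ _ hab _ hEs i hi => hEs i (hanti hab hi)
  rw [union_eq, avoid_mono.directed_le.measure_iUnion]
  exact iSup_le fun a => measure_pi_forall_notMem_le (hA a) a.2

end MissedEvents

section Sparsification

/-- The empirical mean `(F_{a 0} + ⋯ + F_{a (k-1)}) / k` of members of the family `F`, which is
the sparse approximation of a mixture of the family obtained by sampling `a` from the mixing
measure (and `0` for `k = 0`). -/
noncomputable def empiricalMean {Λ M : Type*} {k : ℕ} (F : Λ → M → ℝ) (a : Fin k → Λ) : M → ℝ :=
  fun E => (∑ i, F (a i) E) / k

variable {Λ M : Type*} [MeasurableSpace Λ] [MeasurableSpace M] {μ : Measure Λ}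
  [IsProbabilityMeasure μ]

lemma measureReal_pi_le_sum_eval_le {ι : Type*} [Fintype ι] {X : Λ → ℝ} {c : NNReal}
    (hX : HasSubgaussianMGF X c μ) {s : ℝ} (hs : 0 ≤ s) :
    (Measure.pi fun _ : ι => μ).real {a | s ≤ ∑ i, X (a i)}
      ≤ Real.exp (-s ^ 2 / (2 * (Fintype.card ι * c))) := by
  have hX_eval (i : ι) : HasSubgaussianMGF (X ∘ Function.eval i) c (Measure.pi fun _ : ι => μ) :=
    .of_map (measurable_pi_apply i).aemeasurable
      (by rwa [(measurePreserving_eval (fun _ : ι => μ) i).map_eq])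
  simpa using HasSubgaussianMGF.measure_sum_ge_le_of_iIndepFun
    (iIndepFun_pi fun _ => hX.aemeasurable) (s := Finset.univ) (fun i _ => hX_eval i) hs

lemma measureReal_pi_lt_abs_mean_sub_integral_le {g : Λ → ℝ} (hg : Measurable g)
    (hg01 : ∀ l, g l ∈ Set.Icc (0 : ℝ) 1) (k : ℕ) {t : ℝ} (ht : 0 ≤ t) :
    (Measure.pi fun _ : Fin k => μ).real {a | t < |(∑ i, g (a i)) / k - ∫ l, g l ∂μ|}
      ≤ 2 * Real.exp (-(2 * k * t ^ 2)) := by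
  rcases k.eq_zero_or_pos with rfl | hk
  · simpa using measureReal_le_one.trans one_le_two
  have hk' : (0 : ℝ) < k := Nat.cast_pos.2 hk
  have exponent_eq : -(k * t) ^ 2 / (2 * (k * (1 / 2) ^ 2)) = -(2 * k * t ^ 2) := by
    field_simp
  set X : Λ → ℝ := fun l => g l - ∫ l, g l ∂μ with hX_def
  have hX : HasSubgaussianMGF X ((1 / 2) ^ 2) μ := by
    simpa using hasSubgaussianMGF_of_mem_Icc hg.aemeasurable (ae_of_all _ hg01)
  have upper := measureReal_pi_le_sum_eval_le (ι := Fin k) hX (mul_nonneg hk'.le ht)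
  have lower := measureReal_pi_le_sum_eval_le (ι := Fin k) hX.neg (mul_nonneg hk'.le ht)
  simp only [Fintype.card_fin, NNReal.coe_pow, NNReal.coe_div, NNReal.coe_one, NNReal.coe_ofNat,
    exponent_eq] at upper lower
  have deviation_subset : {a : Fin k → Λ | t < |(∑ i, g (a i)) / k - ∫ l, g l ∂μ|} ⊆
      {a | k * t ≤ ∑ i, X (a i)} ∪ {a | k * t ≤ ∑ i, (-X) (a i)} := by
    intro a ha
    have sum_eq : ∑ i, X (a i) = k * ((∑ i, g (a i)) / k - ∫ l, g l ∂μ) := by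
      rw [mul_sub, mul_div_cancel₀ _ hk'.ne']
      simp [hX_def, Finset.sum_sub_distrib]
    simp only [Set.mem_union, Set.mem_ofPred_eq, Pi.neg_apply, Finset.sum_neg_distrib, sum_eq,
      ← mul_neg, mul_le_mul_iff_right₀ hk']
    exact (lt_abs.1 ha).imp le_of_lt le_of_lt
  calc _ ≤ _ := measureReal_mono deviation_subset
    _ ≤ _ := measureReal_union_le _ _
    _ ≤ 2 * Real.exp (-(2 * k * t ^ 2)) := by linarith

lemma exists_measure_section_le {Ω : Type*} [MeasurableSpace Ω] {ν : Measure Ω}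
    [IsProbabilityMeasure ν] (ρ : Measure M) [SFinite ρ] {S : Set (Ω × M)} (hS : MeasurableSet S)
    {β : ENNReal} (hβ : ∀ E, ν {a | (a, E) ∈ S} ≤ β) :
    ∃ a, ρ {E | (a, E) ∈ S} ≤ β * ρ Set.univ := by
  obtain ⟨a, ha⟩ := exists_le_lintegral (μ := ν)
    (measurable_measure_prodMk_left (ν := ρ) hS).aemeasurable
  refine ⟨a, ha.trans ?_⟩
  calc ∫⁻ a, ρ (Prod.mk a ⁻¹' S) ∂ν = ∫⁻ E, ν ((fun a => (a, E)) ⁻¹' S) ∂ρ := by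
        rw [← Measure.prod_apply hS, Measure.prod_apply_symm hS]
    _ ≤ ∫⁻ _, β ∂ρ := lintegral_mono hβ
    _ = β * ρ Set.univ := lintegral_const β

lemma exists_measure_empiricalMean_le (ρ : Measure M) [SFinite ρ] {F : Λ → M → ℝ}
    (hF : Measurable (Function.uncurry F)) (hF01 : ∀ l E, F l E ∈ Set.Icc (0 : ℝ) 1) (k : ℕ)
    {t : ℝ} (ht : 0 ≤ t) :
    ∃ a : Fin k → Λ, ρ {E | t < |empiricalMean F a E - ∫ l, F l E ∂μ|}
      ≤ ENNReal.ofReal (2 * Real.exp (-(2 * k * t ^ 2))) * ρ Set.univ := by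
  have hF_integral : Measurable fun E => ∫ l, F l E ∂μ :=
    (hF.stronglyMeasurable.integral_prod_left' (μ := μ)).measurable
  have hF_mean : Measurable fun x : (Fin k → Λ) × M => empiricalMean F x.1 x.2 := by
    unfold empiricalMean
    fun_prop
  refine exists_measure_section_le (ν := Measure.pi fun _ : Fin k => μ) ρ
    (S := {x | t < |empiricalMean F x.1 x.2 - ∫ l, F l x.2 ∂μ|})
    (measurableSet_lt measurable_const (hF_mean.sub (hF_integral.comp measurable_snd)).abs)
    fun E => ?_
  rw [ENNReal.le_ofReal_iff_toReal_le (measure_ne_top _ _) (by positivity)]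
  exact measureReal_pi_lt_abs_mean_sub_integral_le
    (hF.comp (measurable_id.prodMk measurable_const)) (fun l => hF01 l E) k ht

end Sparsification

section Consistency

variable {M : Type*} [MeasurableSpace M]

/-- The samples on which a learner fitting the target `h` up to tolerance `η` can be led astray:
those for which some hypothesis `g` in the class `𝒢` is `η`-close to `h` at every sample point,
yet deviates from `h` by more than `γ` with `D`-probability exceeding `ε`. -/
def misleadingSamples (ι : Type*) (D : Measure M) (𝒢 : Set (M → ℝ)) (h : M → ℝ) (ε γ η : ℝ) :
    Set (ι → M) :=
  {Es | ∃ g ∈ 𝒢, (∀ i, |g (Es i) - h (Es i)| ≤ η) ∧ ENNReal.ofReal ε < D {E | γ < |g E - h E|}}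

variable {ι : Type*} {D : Measure M} {𝒢 : Set (M → ℝ)} {h : M → ℝ} {ε γ η : ℝ}

lemma misleadingSamples_eq_empty (h𝒢 : ∀ g ∈ 𝒢, ∀ E, |g E - h E| ≤ γ) :
    misleadingSamples ι D 𝒢 h ε γ η = ∅ := by
  refine Set.eq_empty_iff_forall_notMem.2 fun Es ⟨g, hg, _, hfar⟩ => ?_
  have : {E | γ < |g E - h E|} = ∅ :=
    Set.eq_empty_iff_forall_notMem.2 fun E hE => (h𝒢 g hg E).not_gt hE
  simp [this] at hfar

lemma measure_misleadingSamples_le_of_approx [Fintype ι] [IsProbabilityMeasure D]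
    {α : Type*} [Fintype α] {F : α → M → ℝ} (hF : ∀ a, Measurable (F a)) (hh : Measurable h)
    (hε : 0 ≤ ε) {t : ℝ} (ht : η + t ≤ γ - t)
    (happrox : ∀ g ∈ 𝒢, ∀ Es : ι → M, ∃ a, (∀ i, |F a (Es i) - g (Es i)| ≤ t) ∧
      D {E | t < |F a E - g E|} ≤ ENNReal.ofReal (ε / 2)) :
    Measure.pi (fun _ : ι => D) (misleadingSamples ι D 𝒢 h ε γ η)
      ≤ Fintype.card α * ENNReal.ofReal (Real.exp (-(ε / 2 * Fintype.card ι))) := by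
  refine le_trans (measure_mono ?_) (measure_pi_exists_forall_notMem_le_card_mul
    (A := fun a => {E | η + t < |F a E - h E|})
    fun a => measurableSet_lt measurable_const ((hF a).sub hh).abs)
  rintro Es ⟨g, hg, hclose, hfar⟩
  obtain ⟨a, ha_close, ha_far⟩ := happrox g hg Es
  refine ⟨a, ?_, fun i => ?_⟩
  · have far_subset : {E | γ < |g E - h E|} ⊆
        {E | η + t < |F a E - h E|} ∪ {E | t < |F a E - g E|} := by
      intro E (hE : γ < |g E - h E|)
      by_contra! hnear
      simp only [Set.mem_union, Set.mem_ofPred_eq, not_or, not_lt] at hnear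
      linarith [abs_sub_le (g E) (F a E) (h E), abs_sub_comm (g E) (F a E), hnear.1, hnear.2]
    have half_add_half_le :
        ENNReal.ofReal (ε / 2) + ENNReal.ofReal (ε / 2) ≤
          D {E | η + t < |F a E - h E|} + ENNReal.ofReal (ε / 2) := by
      rw [← ENNReal.ofReal_add (by positivity) (by positivity), add_halves]
      calc ENNReal.ofReal ε ≤ D {E | γ < |g E - h E|} := hfar.le
        _ ≤ _ := (measure_mono far_subset).trans (measure_union_le _ _)
        _ ≤ _ := by gcongr
    exact (ENNReal.add_le_add_iff_right ENNReal.ofReal_ne_top).1 half_add_half_le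
  · simp only [Set.mem_ofPred_eq, not_lt]
    linarith [abs_sub_le (F a (Es i)) (g (Es i)) (h (Es i)), ha_close i, hclose i]

lemma measure_misleadingSamples_le_of_proportional [Fintype ι] [IsProbabilityMeasure D]
    {d : M → ℝ} (hd : Measurable d) (hγ : 0 ≤ γ) (hηγ : η < γ)
    (h𝒢 : ∀ g ∈ 𝒢, ∃ c : ℝ, ∀ E, g E - h E = c * d E) :
    Measure.pi (fun _ : ι => D) (misleadingSamples ι D 𝒢 h ε γ η)
      ≤ ENNReal.ofReal (Real.exp (-(ε * Fintype.card ι))) := by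
  refine le_trans (measure_mono ?_) (measure_pi_exists_forall_notMem_le_of_antitone
    (A := fun r : ℚ => {E | (r : ℝ) < |d E|}) (fun r => measurableSet_lt measurable_const hd.abs)
    fun r s hrs E (hE : (s : ℝ) < |d E|) => (Rat.cast_le.2 hrs).trans_lt hE)
  rintro Es ⟨g, hg, hclose, hfar⟩
  obtain ⟨c, hc⟩ := h𝒢 g hg
  simp only [hc, abs_mul] at hclose hfar
  have hc_pos : 0 < |c| := by
    refine abs_pos.2 fun hc_zero => ?_
    simp [hc_zero, hγ.not_gt] at hfar
  obtain ⟨r, hηr, hrγ⟩ := exists_rat_btwn (div_lt_div_of_pos_right hηγ hc_pos)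
  refine ⟨r, hfar.le.trans (measure_mono fun E hE => ?_), fun i => ?_⟩
  · exact hrγ.trans ((div_lt_iff₀' hc_pos).2 hE)
  · exact not_lt.2 (((le_div_iff₀' hc_pos).2 (hclose i)).trans hηr.le)

end Consistency

section Preparations

variable {Λ M : Type} [Fintype Λ] {f : Λ → M → ℝ} {q : Λ → ℝ}

lemma measurable_prepFun [MeasurableSpace M] (hf : ∀ l, Measurable (f l)) (q : Λ → ℝ) :
    Measurable (prepFun f q) :=
  Finset.measurable_fun_sum _ fun l _ => (hf l).const_mul _

lemma IsPreparation.prepFun_mem_Icc (hq : IsPreparation q)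
    (hf01 : ∀ l E, f l E ∈ Set.Icc (0 : ℝ) 1) (E : M) : prepFun f q E ∈ Set.Icc (0 : ℝ) 1 :=
  (convex_Icc (0 : ℝ) 1).sum_mem (fun l _ => hq.1 l) hq.2 fun l _ => hf01 l E

/-- A preparation as a Mathlib probability mass function, so that ontic states can be sampled from
it. -/
noncomputable def IsPreparation.toPMF (hq : IsPreparation q) : PMF Λ :=
  PMF.ofFintype (fun l => ENNReal.ofReal (q l)) <| by
    rw [← ENNReal.ofReal_sum_of_nonneg fun l _ => hq.1 l, hq.2, ENNReal.ofReal_one]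

lemma IsPreparation.integral_toPMF [MeasurableSpace Λ] [MeasurableSingletonClass Λ]
    (hq : IsPreparation q) (f : Λ → M → ℝ) (E : M) :
    ∫ l, f l E ∂hq.toPMF.toMeasure = prepFun f q E := by
  rw [PMF.integral_eq_sum]
  exact Finset.sum_congr rfl fun l _ => by
    rw [toPMF, PMF.ofFintype_apply, ENNReal.toReal_ofReal (hq.1 l), smul_eq_mul]

lemma exists_prepFun_sub_eq_mul_of_card_le_two [Nonempty Λ] [MeasurableSpace M]
    (hf : ∀ l, Measurable (f l)) (hΛ : Fintype.card Λ ≤ 2) :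
    ∃ d : M → ℝ, Measurable d ∧ ∀ p q : Λ → ℝ, ∑ l, p l = ∑ l, q l →
      ∃ c : ℝ, ∀ E, prepFun f q E - prepFun f p E = c * d E := by
  obtain ⟨a⟩ := ‹Nonempty Λ›
  obtain ⟨b, hab⟩ : ∃ b, ∀ l, l ≠ a → l = b := by
    by_contra! hthird
    obtain ⟨b, hba, -⟩ := hthird a
    obtain ⟨c, hca, hcb⟩ := hthird b
    exact hΛ.not_gt (Fintype.two_lt_card_iff.2 ⟨a, b, c, hba.symm, hca.symm, hcb.symm⟩)
  refine ⟨fun E => f a E - f b E, (hf a).sub (hf b), fun p q hpq => ⟨q a - p a, fun E => ?_⟩⟩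
  calc prepFun f q E - prepFun f p E
      = ∑ l, (q l - p l) * (f l E - f b E) := by
        simp only [prepFun, mul_sub, sub_mul, Finset.sum_sub_distrib, ← Finset.sum_mul, hpq]
        ring
    _ = (q a - p a) * (f a E - f b E) :=
        Fintype.sum_eq_single a fun l hl => by rw [hab l hl, sub_self, mul_zero]

variable {ι : Type*} [Fintype ι] [MeasurableSpace M] {D : Measure M} [IsProbabilityMeasure D]

lemma IsPreparation.exists_empiricalMean_near (hq : IsPreparation q)
    (hf : ∀ l, Measurable (f l)) (hf01 : ∀ l E, f l E ∈ Set.Icc (0 : ℝ) 1)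
    {k : ℕ} {t e : ℝ} (ht : 0 ≤ t) (he : 0 < e)
    (hk : 2 * Real.exp (-(2 * k * t ^ 2)) * (1 + e * Fintype.card ι) < e) (Es : ι → M) :
    ∃ a : Fin k → Λ, (∀ i, |empiricalMean f a (Es i) - prepFun f q (Es i)| ≤ t) ∧
      D {E | t < |empiricalMean f a E - prepFun f q E|} ≤ ENNReal.ofReal e := by
  let _ : MeasurableSpace Λ := ⊤
  have _ : DiscreteMeasurableSpace Λ := ⟨fun _ => trivial⟩
  -- Each sample point is an atom of mass `e`: a set of `ρ`-measure below `e` contains none of them.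
  let ρ : Measure M := D + ENNReal.ofReal e • ∑ i, Measure.dirac (Es i)
  have ρ_univ : ρ Set.univ = ENNReal.ofReal (1 + e * Fintype.card ι) := by
    rw [ENNReal.ofReal_add zero_le_one (by positivity), ENNReal.ofReal_mul he.le]
    simp [ρ]
  obtain ⟨a, ha⟩ := exists_measure_empiricalMean_le (μ := hq.toPMF.toMeasure) ρ
    (measurable_from_prod_countable_right hf) hf01 k ht
  simp only [hq.integral_toPMF] at ha
  set S : Set M := {E | t < |empiricalMean f a E - prepFun f q E|}
  have ρ_lt : ρ S < ENNReal.ofReal e := by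
    refine ha.trans_lt ?_
    rw [ρ_univ, ← ENNReal.ofReal_mul (by positivity)]
    exact (ENNReal.ofReal_lt_ofReal_iff he).2 hk
  refine ⟨a, fun i => not_lt.1 fun hi => ρ_lt.not_ge ?_,
    (Measure.le_add_right le_rfl S).trans ρ_lt.le⟩
  calc ENNReal.ofReal e = ENNReal.ofReal e * Measure.dirac (Es i) S := by
        rw [Measure.dirac_apply_of_mem (show Es i ∈ S from hi), mul_one]
    _ ≤ ENNReal.ofReal e * ∑ j, Measure.dirac (Es j) S := by
        gcongr
        exact Finset.single_le_sum (f := fun j => Measure.dirac (Es j) S) (fun _ _ => zero_le)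
          (Finset.mem_univ i)
    _ ≤ ρ S := by simp [ρ]

/-- The hypothesis class of the learning problem: all functions `g_q` induced by preparations. -/
def preparationClass (f : Λ → M → ℝ) : Set (M → ℝ) :=
  prepFun f '' {q | IsPreparation q}

lemma measure_misleadingSamples_preparationClass_le_card_pow (hf : ∀ l, Measurable (f l))
    (hf01 : ∀ l E, f l E ∈ Set.Icc (0 : ℝ) 1) {h : M → ℝ} (hh : Measurable h) {ε γ η : ℝ}
    (hε : 0 < ε) {k : ℕ} (hηγ : η ≤ γ)
    (hk : 2 * Real.exp (-(k * (γ - η) ^ 2 / 2)) * (1 + ε / 2 * Fintype.card ι) < ε / 2) :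
    Measure.pi (fun _ : ι => D) (misleadingSamples ι D (preparationClass f) h ε γ η)
      ≤ ENNReal.ofReal (Fintype.card Λ ^ k * Real.exp (-(ε / 2 * Fintype.card ι))) := by
  have hk' :
      2 * Real.exp (-(2 * k * ((γ - η) / 2) ^ 2)) * (1 + ε / 2 * Fintype.card ι) < ε / 2 := by
    convert hk using 5
    ring
  have happrox : ∀ g ∈ preparationClass f, ∀ Es : ι → M, ∃ a : Fin k → Λ,
      (∀ i, |empiricalMean f a (Es i) - g (Es i)| ≤ (γ - η) / 2) ∧
        D {E | (γ - η) / 2 < |empiricalMean f a E - g E|} ≤ ENNReal.ofReal (ε / 2) := by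
    rintro _ ⟨q, hq, rfl⟩ Es
    exact hq.exists_empiricalMean_near hf hf01 (by linarith) (half_pos hε) hk' Es
  have hmeas (a : Fin k → Λ) : Measurable (empiricalMean f a) :=
    (Finset.measurable_fun_sum _ fun i _ => hf (a i)).div_const _
  refine (measure_misleadingSamples_le_of_approx hmeas hh hε.le (by linarith) happrox).trans_eq ?_
  rw [ENNReal.ofReal_mul (by positivity), ENNReal.ofReal_pow (by positivity)]
  simp

end Preparations

section SampleSize

lemma three_halves_le_logb_two {x : ℝ} (hx : 3 ≤ x) : 3 / 2 ≤ Real.logb 2 x := by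
  rw [Real.le_logb_iff_rpow_le one_lt_two (by linarith)]
  refine le_trans (le_of_sq_le_sq ?_ (by norm_num)) hx
  rw [← Real.rpow_natCast, ← Real.rpow_mul zero_le_two]
  norm_num

lemma nine_mul_log_sq_mul_le {A x : ℝ} (hA : 3 / 2 ≤ A) (hx : 1000 * Real.log A ^ 2 ≤ x) :
    9 * Real.log (A ^ 2 * (2 * x + 4)) ≤ x := by
  have one_third_le_log : 1 / 3 ≤ Real.log A := by
    have : A⁻¹ ≤ 2 / 3 := by simpa using inv_anti₀ (by norm_num) hA
    linarith [Real.one_sub_inv_le_log_of_pos (by linarith : 0 < A)]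
  have log_le_sq : Real.log A ≤ 3 * Real.log A ^ 2 := by nlinarith
  have hx_ge : 1000 / 9 ≤ x := by nlinarith
  have log_linear_le : Real.log (2 * x + 4) ≤ (2 * x + 4) / 64 - 1 + 6 * Real.log 2 := by
    have := Real.log_le_sub_one_of_pos (by positivity : 0 < (2 * x + 4) / 2 ^ 6)
    rw [Real.log_div (by positivity) (by norm_num), Real.log_pow] at this
    norm_num at this ⊢
    linarith
  rw [Real.log_mul (by positivity) (by positivity), Real.log_pow]
  push_cast
  linarith [Real.log_two_lt_d9]

lemma nine_mul_log_mul_le_of_sampleSize {L Δ ε m : ℝ} (hL : 3 / 2 ≤ L) (hΔ0 : 0 < Δ) (hΔ1 : Δ ≤ 1)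
    (hε0 : 0 < ε) (hε1 : ε ≤ 1)
    (hm : 1000 * (L / Δ ^ 2 * Real.log (L / (Δ * ε)) ^ 2) ≤ ε * m) :
    9 * Real.log (2 * m + 4 / ε) * (L / Δ ^ 2) ≤ ε * m := by
  have hL0 : 0 < L := by linarith
  set A := L / (Δ * ε) with hA
  set x := ε * m / (L / Δ ^ 2) with hx
  have hx_ge : 1000 * Real.log A ^ 2 ≤ x := by
    rw [hx, le_div_iff₀ (by positivity)]
    linarith
  have hx0 : 0 ≤ x := le_trans (by positivity) hx_ge
  have hLA : L ≤ A := le_div_self hL0.le (by positivity) (mul_le_one₀ hΔ1 hε0.le hε1)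
  have m_le : m ≤ A ^ 2 * x :=
    calc m = A ^ 2 * x * (ε / L) := by rw [hA, hx]; field_simp
      _ ≤ A ^ 2 * x := mul_le_of_le_one_right (by positivity) ((div_le_one hL0).2 (by linarith))
  have inv_le : 1 / ε ≤ A ^ 2 :=
    calc 1 / ε ≤ A := by
          rw [hA, div_le_div_iff₀ hε0 (by positivity)]
          nlinarith
      _ ≤ A ^ 2 := le_self_pow₀ (by linarith) two_ne_zero
  have hm0 : 0 ≤ m := nonneg_of_mul_nonneg_right (le_trans (by positivity) hm) hε0
  rw [← le_div_iff₀ (by positivity)]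
  calc 9 * Real.log (2 * m + 4 / ε) ≤ 9 * Real.log (A ^ 2 * (2 * x + 4)) := by
        gcongr
        rw [div_eq_mul_one_div]
        linarith
    _ ≤ x := nine_mul_log_sq_mul_le (hL.trans hLA) hx_ge

lemma exists_sparsity_of_sampleSize {L Δ ε m : ℝ} (hL : 3 / 2 ≤ L) (hΔ0 : 0 < Δ) (hΔ1 : Δ ≤ 1)
    (hε0 : 0 < ε) (hε1 : ε ≤ 1)
    (hm : 1000 * (L / Δ ^ 2 * Real.log (L / (Δ * ε)) ^ 2) ≤ ε * m) :
    ∃ k : ℕ, 2 * Real.exp (-(k * Δ ^ 2 / 2)) * (1 + ε / 2 * m) < ε / 2 ∧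
      k * (L * Real.log 2) ≤ ε / 4 * m := by
  have hm0 : 0 ≤ m := nonneg_of_mul_nonneg_right (le_trans (by positivity) hm) hε0
  have hlog2 : Real.log 2 ≤ 3 / 4 := by linarith [Real.log_two_lt_d9]
  set W := Real.log (2 * m + 4 / ε) with hW
  have one_le_W : 1 ≤ W := by
    rw [hW, Real.le_log_iff_exp_le (by positivity)]
    have : 4 ≤ 4 / ε := le_div_self (by norm_num) hε0 hε1
    linarith [Real.exp_one_lt_d9]
  have one_le_div : 1 ≤ W / Δ ^ 2 := by
    rw [le_div_iff₀ (by positivity), one_mul]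
    exact (pow_le_one₀ hΔ0.le hΔ1).trans one_le_W
  obtain ⟨k, lt_k, k_le⟩ : ∃ k : ℕ, 2 * (W / Δ ^ 2) < k ∧ k ≤ 3 * (W / Δ ^ 2) := by
    refine ⟨⌊2 * (W / Δ ^ 2)⌋₊ + 1, mod_cast Nat.lt_floor_add_one _, ?_⟩
    push_cast
    linarith [Nat.floor_le (show 0 ≤ 2 * (W / Δ ^ 2) by positivity)]
  refine ⟨k, ?_, ?_⟩
  · have W_lt : W < k * Δ ^ 2 / 2 := by
      rw [← mul_div_assoc, div_lt_iff₀ (by positivity)] at lt_k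
      linarith
    calc 2 * Real.exp (-(k * Δ ^ 2 / 2)) * (1 + ε / 2 * m)
        < 2 * Real.exp (-W) * (1 + ε / 2 * m) := by gcongr
      _ = ε / 2 := by
        rw [Real.exp_neg, hW, Real.exp_log (by positivity)]
        field_simp
        ring
  · calc k * (L * Real.log 2) ≤ 3 * (W / Δ ^ 2) * (L * (3 / 4)) := by gcongr
      _ = 9 * W * (L / Δ ^ 2) / 4 := by ring
      _ ≤ ε * m / 4 :=
        div_le_div_of_nonneg_right (nine_mul_log_mul_le_of_sampleSize hL hΔ0 hΔ1 hε0 hε1 hm)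
          (by norm_num)
      _ = ε / 4 * m := by ring

lemma mul_le_mul_and_exp_neg_le_of_sampleSize {K a ε δ m : ℝ} (hK : 4 ≤ K) (ha : 0 ≤ a)
    (hε : 0 < ε) (hδ0 : 0 < δ) (hδ1 : δ ≤ 1) (hm : K / ε * (a + Real.log (1 / δ)) ≤ m) :
    K * a ≤ ε * m ∧ Real.exp (-(ε / 4 * m)) ≤ δ := by
  have log_inv_nonneg : 0 ≤ Real.log (1 / δ) := Real.log_nonneg ((one_le_div hδ0).2 hδ1)
  rw [div_mul_eq_mul_div, div_le_iff₀' hε, mul_add] at hm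
  refine ⟨by nlinarith, ?_⟩
  rw [← Real.le_log_iff_exp_le hδ0]
  rw [one_div, Real.log_inv] at hm log_inv_nonneg
  nlinarith

end SampleSize

section OccamBound

variable {Λ M : Type} [Fintype Λ] [MeasurableSpace M] {f : Λ → M → ℝ} {ι : Type*}

lemma misleadingSamples_preparationClass_eq_empty {D : Measure M}
    (hf01 : ∀ l E, f l E ∈ Set.Icc (0 : ℝ) 1) {p : Λ → ℝ} (hp : IsPreparation p) {ε γ η : ℝ}
    (hγ : 1 ≤ γ) : misleadingSamples ι D (preparationClass f) (prepFun f p) ε γ η = ∅ := by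
  refine misleadingSamples_eq_empty ?_
  rintro _ ⟨q, hq, rfl⟩ E
  exact (Real.dist_le_of_mem_Icc_01 (hq.prepFun_mem_Icc hf01 E)
    (hp.prepFun_mem_Icc hf01 E)).trans hγ

variable [Fintype ι] {D : Measure M} [IsProbabilityMeasure D]

lemma measure_misleadingSamples_preparationClass_le_of_two_lt_card (hΛ : 2 < Fintype.card Λ)
    (hf : ∀ l, Measurable (f l)) (hf01 : ∀ l E, f l E ∈ Set.Icc (0 : ℝ) 1)
    {h : M → ℝ} (hh : Measurable h) {ε γ η : ℝ} (hε0 : 0 < ε) (hε1 : ε ≤ 1) (hηγ : η < γ)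
    (hγη : γ - η ≤ 1)
    (hm : 1000 * (Real.logb 2 (Fintype.card Λ) / (γ - η) ^ 2 *
      Real.log (Real.logb 2 (Fintype.card Λ) / ((γ - η) * ε)) ^ 2) ≤ ε * Fintype.card ι) :
    Measure.pi (fun _ : ι => D) (misleadingSamples ι D (preparationClass f) h ε γ η)
      ≤ ENNReal.ofReal (Real.exp (-(ε / 4 * Fintype.card ι))) := by
  have hcard : (3 : ℝ) ≤ Fintype.card Λ := mod_cast hΛ
  obtain ⟨k, hk, k_mul_le⟩ := exists_sparsity_of_sampleSize (three_halves_le_logb_two hcard)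
    (sub_pos.2 hηγ) hγη hε0 hε1 hm
  refine (measure_misleadingSamples_preparationClass_le_card_pow hf hf01 hh hε0 hηγ.le hk).trans
    (ENNReal.ofReal_le_ofReal ?_)
  have card_pow_eq : (Fintype.card Λ : ℝ) ^ k
      = Real.exp (k * (Real.logb 2 (Fintype.card Λ) * Real.log 2)) := by
    rw [Real.logb, div_mul_cancel₀ _ (Real.log_pos one_lt_two).ne', Real.exp_nat_mul,
      Real.exp_log (by linarith)]
  rw [card_pow_eq, ← Real.exp_add]
  exact Real.exp_le_exp.2 (by linarith)

lemma measure_misleadingSamples_preparationClass_le_of_card_le_two (hΛ : Fintype.card Λ ≤ 2)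
    (hf : ∀ l, Measurable (f l)) {p : Λ → ℝ} (hp : IsPreparation p) {ε γ η : ℝ} (hγ : 0 ≤ γ)
    (hηγ : η < γ) :
    Measure.pi (fun _ : ι => D) (misleadingSamples ι D (preparationClass f) (prepFun f p) ε γ η)
      ≤ ENNReal.ofReal (Real.exp (-(ε * Fintype.card ι))) := by
  have : Nonempty Λ := by
    by_contra! hempty
    simpa using hp.2
  obtain ⟨d, hd, hmul⟩ := exists_prepFun_sub_eq_mul_of_card_le_two hf hΛ
  refine measure_misleadingSamples_le_of_proportional hd hγ hηγ ?_
  rintro _ ⟨q, hq, rfl⟩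
  exact hmul p q (hp.2.trans hq.2.symm)

lemma measure_misleadingSamples_preparationClass_le (hf : ∀ l, Measurable (f l))
    (hf01 : ∀ l E, f l E ∈ Set.Icc (0 : ℝ) 1)
    {p : Λ → ℝ} (hp : IsPreparation p) {ε γ η : ℝ} (hε0 : 0 < ε) (hε1 : ε ≤ 1) (hη : 0 ≤ η)
    (hηγ : η < γ)
    (hm : 1000 * (Real.logb 2 (Fintype.card Λ) / (γ - η) ^ 2 *
      Real.log (Real.logb 2 (Fintype.card Λ) / ((γ - η) * ε)) ^ 2) ≤ ε * Fintype.card ι) :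
    Measure.pi (fun _ : ι => D) (misleadingSamples ι D (preparationClass f) (prepFun f p) ε γ η)
      ≤ ENNReal.ofReal (Real.exp (-(ε / 4 * Fintype.card ι))) := by
  rcases le_or_gt 1 γ with hγ1 | hγ1
  · simp [misleadingSamples_preparationClass_eq_empty hf01 hp hγ1]
  rcases le_or_gt (Fintype.card Λ) 2 with hΛ | hΛ
  · refine (measure_misleadingSamples_preparationClass_le_of_card_le_two hΛ hf hp
      (hη.trans hηγ.le) hηγ).trans (ENNReal.ofReal_le_ofReal ?_)
    gcongr
    linarith
  · exact measure_misleadingSamples_preparationClass_le_of_two_lt_card hΛ hf hf01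
      (measurable_prepFun hf p) hε0 hε1 hηγ (by linarith) hm

end OccamBound

/-- **Occam's razor for efficient ontological models.**  There is a universal constant
`K > 0` such that: for every finite nonempty ontic space `Λ`, measurable space of
measurements `M` with outcome-probability function `f : Λ × M → [0,1]` measurable in its
second argument, probability measure `D` on `M`, target preparation `p`, parameters
`ε, δ ∈ (0,1)` and `γ > η > 0`, if
`m ≥ (K/ε)·((log₂|Λ|/(γ−η)²)·log²(log₂|Λ|/((γ−η)ε)) + log(1/δ))`
then with probability at least `1 − δ` over `E₁,…,E_m` drawn i.i.d. from `D`, every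
preparation `q` with `|g_q(E_i) − g_p(E_i)| ≤ η` for all `i` satisfies
`Pr_{E∼D}[|g_q(E) − g_p(E)| > γ] ≤ ε`. -/
theorem occams_razor_for_EOMs :
    ∃ K : ℝ, 0 < K ∧
      ∀ (Λ : Type) (_ : Fintype Λ), Nonempty Λ →
      ∀ (M : Type) (_ : MeasurableSpace M) (f : Λ → M → ℝ),
        (∀ l : Λ, Measurable (f l)) →
        (∀ (l : Λ) (E : M), f l E ∈ Set.Icc (0 : ℝ) 1) →
      ∀ (D : Measure M), IsProbabilityMeasure D →
      ∀ p : Λ → ℝ, IsPreparation p →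
      ∀ ε δ γ η : ℝ,
        ε ∈ Set.Ioo (0 : ℝ) 1 → δ ∈ Set.Ioo (0 : ℝ) 1 → 0 < η → η < γ →
      ∀ m : ℕ,
        (m : ℝ) ≥ K / ε *
            ((Real.logb 2 (Fintype.card Λ) / (γ - η) ^ 2) *
                (Real.log (Real.logb 2 (Fintype.card Λ) / ((γ - η) * ε))) ^ 2 +
              Real.log (1 / δ)) →
        1 - ENNReal.ofReal δ ≤
          (Measure.pi fun _ : Fin m => D)
            {Es : Fin m → M |
              ∀ q : Λ → ℝ, IsPreparation q →
                (∀ i : Fin m, |prepFun f q (Es i) - prepFun f p (Es i)| ≤ η) →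
                D {E : M | γ < |prepFun f q E - prepFun f p E|} ≤ ENNReal.ofReal ε} := by
  refine ⟨1000, by norm_num, fun Λ _ _ M _ f hf hf01 D _ p hp ε δ γ η ⟨hε0, hε1⟩ ⟨hδ0, hδ1⟩ hη hηγ
    m hm => ?_⟩
  have logb_card_nonneg : 0 ≤ Real.logb 2 (Fintype.card Λ) :=
    Real.logb_nonneg one_lt_two (mod_cast Fintype.card_pos)
  obtain ⟨class_le, exp_le⟩ :=
    mul_le_mul_and_exp_neg_le_of_sampleSize (by norm_num) (by positivity) hε0 hδ0 hδ1.le hm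
  rw [← Fintype.card_fin m] at class_le exp_le
  have misleading_le : Measure.pi (fun _ : Fin m => D)
      (misleadingSamples (Fin m) D (preparationClass f) (prepFun f p) ε γ η)
        ≤ ENNReal.ofReal δ :=
    (measure_misleadingSamples_preparationClass_le hf hf01 hp hε0 hε1.le hη.le hηγ class_le).trans
      (ENNReal.ofReal_le_ofReal exp_le)
  exact one_sub_le_measure_of_compl_subset misleading_le fun Es hEs q hq hclose =>
    not_lt.1 fun hfar => hEs ⟨_, ⟨q, hq, rfl⟩, hclose, hfar⟩
end

section
/- Let Λ be a finite nonempty set, k ≥ 1 a natural number, and p ∈ [1/2, 1]. Suppose for every string y ∈ {0,1}^k there is a probability distribution μ_y : Λ → [0,1] (with Σ_λ μ_y(λ) = 1), and there are functions f₁,…,f_k : Λ → [0,1] such that for all y ∈ {0,1}^k and all i ∈ {1,…,k}: if y_i = 0 then Σ_{λ∈Λ} μ_y(λ)·f_i(λ) ≥ p, and if y_i = 1 then Σ_{λ∈Λ} μ_y(λ)·(1 − f_i(λ)) ≥ p. Then k·(1 − H₂(p)) ≤ log₂|Λ|, where H₂(p) = −p·log₂ p − (1−p)·log₂(1−p) is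 the binary entropy function (with H₂(0) = H₂(1) = 0). -/
/-- The binary entropy function with logarithm base 2,
`H₂(p) = −p·log₂ p − (1−p)·log₂(1−p)` (with `H₂(0) = H₂(1) = 0`, using the convention
`log 0 = 0`). -/
noncomputable def binEntropy2 (p : ℝ) : ℝ :=
  -(p * Real.logb 2 p) - (1 - p) * Real.logb 2 (1 - p)

/-!
Blur each decoder by a symmetric channel that keeps its answer with probability `P i`, its own
average success probability. Multiplying the blurred decoders gives, for each state `l`, a
distribution over whole messages. No such guessing strategy succeeds on uniform messages with
probability more than `|Λ| / |α| ^ |ι|`. On the other hand, weighted AM-GM bounds its success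
probability below by `∏ i, P i ^ P i * ((1 - P i) / (|α| - 1)) ^ (1 - P i)`, and the logarithm of
this product is minus the sum of the `|α|`-ary entropies of the error probabilities `1 - P i`.
-/

section

open Finset Real
open scoped BigOperators

lemma prod_rpow_mul_rpow_le_sum_mul_prod {ι X : Type*} [Fintype ι] [Fintype X] {w : X → ℝ}
    (hw : w ∈ stdSimplex ℝ X) {t : ι → X → ℝ} (ht : ∀ i x, t i x ∈ Set.Icc 0 1) {a b : ι → ℝ}
    (ha : ∀ i, 0 ≤ a i) (hb : ∀ i, 0 ≤ b i) :
    ∏ i, a i ^ (∑ x, w x * t i x) * b i ^ (∑ x, w x * (1 - t i x)) ≤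
      ∑ x, w x * ∏ i, (t i x * a i + (1 - t i x) * b i) := by
  have ht' i x : 0 ≤ 1 - t i x := sub_nonneg.2 (ht i x).2
  have hgeom i x : 0 ≤ a i ^ t i x * b i ^ (1 - t i x) :=
    mul_nonneg (rpow_nonneg (ha i) _) (rpow_nonneg (hb i) _)
  calc ∏ i, a i ^ (∑ x, w x * t i x) * b i ^ (∑ x, w x * (1 - t i x))
      = ∏ i, ∏ x, (a i ^ t i x * b i ^ (1 - t i x)) ^ w x := by
        refine prod_congr rfl fun i _ ↦ ?_
        rw [rpow_sum_of_nonneg (ha i) fun x _ ↦ mul_nonneg (hw.1 x) (ht i x).1,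
          rpow_sum_of_nonneg (hb i) fun x _ ↦ mul_nonneg (hw.1 x) (ht' i x), ← prod_mul_distrib]
        refine prod_congr rfl fun x _ ↦ ?_
        rw [mul_rpow (rpow_nonneg (ha i) _) (rpow_nonneg (hb i) _), ← rpow_mul (ha i),
          ← rpow_mul (hb i), mul_comm (w x), mul_comm (w x)]
    _ = ∏ x, (∏ i, a i ^ t i x * b i ^ (1 - t i x)) ^ w x := by
        rw [prod_comm]
        exact prod_congr rfl fun x _ ↦ finsetProd_rpow _ _ (fun i _ ↦ hgeom i x) _
    _ ≤ ∑ x, w x * ∏ i, a i ^ t i x * b i ^ (1 - t i x) :=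
        geom_mean_le_arith_mean_weighted _ _ _ (fun x _ ↦ hw.1 x) hw.2
          fun x _ ↦ prod_nonneg fun i _ ↦ hgeom i x
    _ ≤ ∑ x, w x * ∏ i, (t i x * a i + (1 - t i x) * b i) := by
        refine sum_le_sum fun x _ ↦ mul_le_mul_of_nonneg_left ?_ (hw.1 x)
        exact prod_le_prod (fun i _ ↦ hgeom i x) fun i _ ↦
          geom_mean_le_arith_mean2_weighted (ht i x).1 (ht' i x) (ha i) (hb i)
            (add_sub_cancel _ _)

lemma exp_neg_qaryEntropy_one_sub {q : ℕ} (hq : 2 ≤ q) {p : ℝ} (hp : p ∈ Set.Icc 0 1) :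
    exp (-qaryEntropy q (1 - p)) = p ^ p * ((1 - p) / (q - 1)) ^ (1 - p) := by
  have rpow_self {x : ℝ} (hx : 0 ≤ x) : x ^ x = exp (x * log x) := by
    rcases hx.eq_or_lt with rfl | hx
    · simp
    · rw [rpow_def_of_pos hx, mul_comm]
  have hp' : 0 ≤ 1 - p := sub_nonneg.2 hp.2
  have hq' : 0 < (q : ℝ) - 1 := by
    have : (2 : ℝ) ≤ q := by exact_mod_cast hq
    linarith
  rw [div_rpow hp' hq'.le, rpow_self hp.1, rpow_self hp', rpow_def_of_pos hq', ← exp_sub,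
    ← exp_add]
  congr 1
  simp only [qaryEntropy, binEntropy, log_inv, sub_sub_cancel]
  push_cast
  ring

lemma prod_mem_stdSimplex {ι α : Type*} [Fintype ι] [DecidableEq ι] [Fintype α] {v : ι → α → ℝ}
    (hv : ∀ i, v i ∈ stdSimplex ℝ α) : (fun y : ι → α ↦ ∏ i, v i (y i)) ∈ stdSimplex ℝ (ι → α) := by
  refine ⟨fun y ↦ prod_nonneg fun i _ ↦ (hv i).1 (y i), ?_⟩
  rw [← Fintype.prod_sum]
  exact prod_eq_one fun i _ ↦ (hv i).2

lemma sum_sum_mul_le_card {Y Λ : Type*} [Fintype Y] [Fintype Λ] {μ : Y → Λ → ℝ}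
    (hμ : ∀ y l, μ y l ≤ 1) {G : Λ → Y → ℝ} (hG : ∀ l, G l ∈ stdSimplex ℝ Y) :
    ∑ y, ∑ l, μ y l * G l y ≤ Fintype.card Λ :=
  calc ∑ y, ∑ l, μ y l * G l y ≤ ∑ y, ∑ l, G l y :=
        sum_le_sum fun y _ ↦ sum_le_sum fun l _ ↦
          mul_le_of_le_one_left ((hG l).1 y) (hμ y l)
    _ = ∑ l, ∑ y, G l y := sum_comm
    _ = Fintype.card Λ := by simp [(hG _).2]

/-- The output distribution, on input distribution `v`, of the symmetric channel on the alphabet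
`α` that transmits a symbol faithfully with probability `p` and otherwise replaces it by a
uniformly random different symbol. -/
noncomputable def symmetricChannel {α : Type*} [Fintype α] (p : ℝ) (v : α → ℝ) (a : α) : ℝ :=
  v a * p + (1 - v a) * ((1 - p) / (Fintype.card α - 1))

lemma symmetricChannel_mem_stdSimplex {α : Type*} [Fintype α] [Nontrivial α] {p : ℝ}
    (hp : p ∈ Set.Icc 0 1) {v : α → ℝ} (hv : v ∈ stdSimplex ℝ α) :
    symmetricChannel p v ∈ stdSimplex ℝ α := by
  have hcard : 0 < (Fintype.card α : ℝ) - 1 :=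
    sub_pos.2 (Nat.one_lt_cast.2 Fintype.one_lt_card)
  constructor
  · intro a
    have ha := mem_Icc_of_mem_stdSimplex hv a
    exact add_nonneg (mul_nonneg ha.1 hp.1)
      (mul_nonneg (sub_nonneg.2 ha.2) (div_nonneg (sub_nonneg.2 hp.2) hcard.le))
  · simp only [symmetricChannel, sum_add_distrib, ← sum_mul, sum_sub_distrib, hv.2, sum_const,
      card_univ, nsmul_eq_mul, mul_one]
    field_simp
    ring

section RandomAccessCode

variable {ι α Λ : Type*} [Fintype ι] [DecidableEq ι] [Fintype α] [Fintype Λ]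

/-- The probability that the `i`-th symbol of a uniformly random message `y : ι → α` is recovered
correctly, when `y` is encoded as a state `l` drawn from `μ y` and the `i`-th decoder answers with
a symbol drawn from `g i l`. -/
noncomputable def avgSuccess (μ : (ι → α) → Λ → ℝ) (g : ι → Λ → α → ℝ) (i : ι) : ℝ :=
  𝔼 y, ∑ l, μ y l * g i l (y i)

variable {μ : (ι → α) → Λ → ℝ} {g : ι → Λ → α → ℝ}

lemma le_avgSuccess [Nonempty α] {i : ι} {p : ℝ} (h : ∀ y, p ≤ ∑ l, μ y l * g i l (y i)) :
    p ≤ avgSuccess μ g i :=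
  le_expect univ_nonempty fun y _ ↦ h y

lemma avgSuccess_mem_Icc [Nonempty α] (hμ : ∀ y, μ y ∈ stdSimplex ℝ Λ)
    (hg : ∀ i l, g i l ∈ stdSimplex ℝ α) (i : ι) : avgSuccess μ g i ∈ Set.Icc 0 1 := by
  have hgi (y : ι → α) l := mem_Icc_of_mem_stdSimplex (hg i l) (y i)
  refine ⟨le_avgSuccess fun y ↦ sum_nonneg fun l _ ↦ mul_nonneg ((hμ y).1 l) (hgi y l).1,
    expect_le univ_nonempty fun y _ ↦ ?_⟩
  calc ∑ l, μ y l * g i l (y i) ≤ ∑ l, μ y l :=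
        sum_le_sum fun l _ ↦ mul_le_of_le_one_right ((hμ y).1 l) (hgi y l).2
    _ = 1 := (hμ y).2

/-- The joint distribution of a uniformly random `y` and a state drawn from `μ y`. -/
noncomputable def uniformJoint {Y : Type*} [Fintype Y] (μ : Y → Λ → ℝ) (x : Y × Λ) : ℝ :=
  μ x.1 x.2 / Fintype.card Y

lemma sum_uniformJoint_mul {Y : Type*} [Fintype Y] (μ F : Y → Λ → ℝ) :
    ∑ x, uniformJoint μ x * F x.1 x.2 = 𝔼 y, ∑ l, μ y l * F y l := by
  simp only [uniformJoint, Fintype.expect_eq_sum_div_card, Fintype.sum_prod_type, sum_div,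
    div_mul_eq_mul_div]

lemma uniformJoint_mem_stdSimplex {Y : Type*} [Fintype Y] [Nonempty Y] {μ : Y → Λ → ℝ}
    (hμ : ∀ y, μ y ∈ stdSimplex ℝ Λ) : uniformJoint μ ∈ stdSimplex ℝ (Y × Λ) := by
  refine ⟨fun x ↦ div_nonneg ((hμ x.1).1 x.2) (Nat.cast_nonneg _), ?_⟩
  simpa [(hμ _).2] using sum_uniformJoint_mul μ fun _ _ ↦ 1

lemma exp_neg_sum_qaryEntropy_le_expect [Nontrivial α] (hμ : ∀ y, μ y ∈ stdSimplex ℝ Λ)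
    (hg : ∀ i l, g i l ∈ stdSimplex ℝ α) :
    exp (-∑ i, qaryEntropy (Fintype.card α) (1 - avgSuccess μ g i)) ≤
      𝔼 y, ∑ l, μ y l * ∏ i, symmetricChannel (avgSuccess μ g i) (g i l) (y i) := by
  have hP := avgSuccess_mem_Icc hμ hg
  have hw := uniformJoint_mem_stdSimplex hμ
  have hcard : 2 ≤ Fintype.card α := Fintype.one_lt_card
  have hcard' : 0 ≤ (Fintype.card α : ℝ) - 1 := sub_nonneg.2 (Nat.one_le_cast.2 (by lia))
  have hsuccess i : ∑ x, uniformJoint μ x * g i x.2 (x.1 i) = avgSuccess μ g i :=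
    sum_uniformJoint_mul μ fun y l ↦ g i l (y i)
  have hfailure i : ∑ x, uniformJoint μ x * (1 - g i x.2 (x.1 i)) = 1 - avgSuccess μ g i := by
    simp only [mul_sub, mul_one, sum_sub_distrib, hw.2, hsuccess]
  have hamgm := prod_rpow_mul_rpow_le_sum_mul_prod hw
    (fun i x ↦ mem_Icc_of_mem_stdSimplex (hg i x.2) (x.1 i)) (fun i ↦ (hP i).1)
    fun i ↦ div_nonneg (sub_nonneg.2 (hP i).2) hcard'
  simp only [hsuccess, hfailure] at hamgm
  calc exp (-∑ i, qaryEntropy (Fintype.card α) (1 - avgSuccess μ g i))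
      = ∏ i, exp (-qaryEntropy (Fintype.card α) (1 - avgSuccess μ g i)) := by
        rw [← sum_neg_distrib, exp_sum]
    _ ≤ ∑ x, uniformJoint μ x *
          ∏ i, symmetricChannel (avgSuccess μ g i) (g i x.2) (x.1 i) := by
        simpa only [exp_neg_qaryEntropy_one_sub hcard (hP _), symmetricChannel] using hamgm
    _ = 𝔼 y, ∑ l, μ y l * ∏ i, symmetricChannel (avgSuccess μ g i) (g i l) (y i) :=
        sum_uniformJoint_mul μ fun y l ↦
          ∏ i, symmetricChannel (avgSuccess μ g i) (g i l) (y i)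

lemma sum_log_card_sub_qaryEntropy_le [Nontrivial α] (hμ : ∀ y, μ y ∈ stdSimplex ℝ Λ)
    (hg : ∀ i l, g i l ∈ stdSimplex ℝ α) :
    ∑ i, (log (Fintype.card α) - qaryEntropy (Fintype.card α) (1 - avgSuccess μ g i)) ≤
      log (Fintype.card Λ) := by
  have hguess := sum_sum_mul_le_card (fun y l ↦ (mem_Icc_of_mem_stdSimplex (hμ y) l).2)
    fun l ↦ prod_mem_stdSimplex fun i ↦
      symmetricChannel_mem_stdSimplex (avgSuccess_mem_Icc hμ hg i) (hg i l)
  have hexp := exp_neg_sum_qaryEntropy_le_expect hμ hg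
  rw [Fintype.expect_eq_sum_div_card, le_div_iff₀ (by positivity)] at hexp
  have hlog := log_le_log (by positivity) (hexp.trans hguess)
  rw [log_mul (exp_ne_zero _) (by positivity), log_exp, Fintype.card_fun, Nat.cast_pow,
    log_pow] at hlog
  rw [sum_sub_distrib, sum_const, card_univ, nsmul_eq_mul]
  linarith

theorem random_access_code_bound_general [Nontrivial α] (hμ : ∀ y, μ y ∈ stdSimplex ℝ Λ)
    (hg : ∀ i l, g i l ∈ stdSimplex ℝ α) {p : ι → ℝ} (hp : ∀ i, 1 / (Fintype.card α : ℝ) ≤ p i)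
    (h : ∀ i, p i ≤ avgSuccess μ g i) :
    ∑ i, (1 - qaryEntropy (Fintype.card α) (1 - p i) / log (Fintype.card α)) ≤
      logb (Fintype.card α) (Fintype.card Λ) := by
  have hcard : 2 ≤ Fintype.card α := Fintype.one_lt_card
  have hlog : 0 < log (Fintype.card α) := log_pos (Nat.one_lt_cast.2 hcard)
  have hmono i : qaryEntropy (Fintype.card α) (1 - avgSuccess μ g i) ≤
      qaryEntropy (Fintype.card α) (1 - p i) :=
    (qaryEntropy_strictMonoOn hcard).monotoneOn
      ⟨sub_nonneg.2 (avgSuccess_mem_Icc hμ hg i).2, sub_le_sub_left ((hp i).trans (h i)) 1⟩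
      ⟨sub_nonneg.2 ((h i).trans (avgSuccess_mem_Icc hμ hg i).2), sub_le_sub_left (hp i) 1⟩
      (sub_le_sub_left (h i) 1)
  rw [logb, le_div_iff₀ hlog, sum_mul]
  calc ∑ i, (1 - qaryEntropy (Fintype.card α) (1 - p i) / log (Fintype.card α)) *
        log (Fintype.card α)
      = ∑ i, (log (Fintype.card α) - qaryEntropy (Fintype.card α) (1 - p i)) := by
        simp only [sub_mul, one_mul, div_mul_cancel₀ _ hlog.ne']
    _ ≤ ∑ i, (log (Fintype.card α) - qaryEntropy (Fintype.card α) (1 - avgSuccess μ g i)) :=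
        sum_le_sum fun i _ ↦ sub_le_sub_left (hmono i) _
    _ ≤ log (Fintype.card Λ) := sum_log_card_sub_qaryEntropy_le hμ hg

end RandomAccessCode

/-- The distribution on `Bool` of a two-outcome measurement whose outcome `+1` has probability
`t`. Outcome `+1` is encoded as `false`, since it is the correct answer for a bit `0`. -/
def bitDist (t : ℝ) (b : Bool) : ℝ :=
  bif b then 1 - t else t

lemma bitDist_mem_stdSimplex {t : ℝ} (ht : t ∈ Set.Icc 0 1) :
    bitDist t ∈ stdSimplex ℝ Bool :=
  ⟨Bool.forall_bool.2 ⟨ht.1, sub_nonneg.2 ht.2⟩, by simp [bitDist]⟩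

lemma binEntropy2_eq_qaryEntropy_div_log (p : ℝ) :
    binEntropy2 p = qaryEntropy 2 (1 - p) / log 2 := by
  rw [qaryEntropy_two, binEntropy_one_sub]
  simp only [binEntropy2, binEntropy, logb, log_inv]
  ring

end

/-- **Random access code bound for preparations of an efficient ontological model.**
Let `Λ` be a finite nonempty ontic state space, `k ≥ 1`, and `p ∈ [1/2, 1]`.  Suppose for
every `y ∈ {0,1}^k` there is a probability distribution `μ_y` on `Λ`, and there are
outcome-probability functions `f₁,…,f_k : Λ → [0,1]` such that for all `y` and `i`:
if `y_i = 0` then the probability `Σ_λ μ_y(λ)·f_i(λ)` of outcome `+1` for measurement `i`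
is at least `p`, and if `y_i = 1` then the probability `Σ_λ μ_y(λ)·(1 − f_i(λ))` of outcome
`−1` is at least `p`.  Then `k·(1 − H₂(p)) ≤ log₂|Λ|`. -/
theorem random_access_code_bound
    (Λ : Type) [Fintype Λ] [Nonempty Λ] (k : ℕ) (hk : 1 ≤ k)
    (p : ℝ) (hp : p ∈ Set.Icc (1 / 2 : ℝ) 1)
    (μ : (Fin k → Bool) → Λ → ℝ)
    (hμ0 : ∀ (y : Fin k → Bool) (l : Λ), 0 ≤ μ y l)
    (hμ1 : ∀ y : Fin k → Bool, ∑ l : Λ, μ y l = 1)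
    (f : Fin k → Λ → ℝ)
    (hf : ∀ (i : Fin k) (l : Λ), f i l ∈ Set.Icc (0 : ℝ) 1)
    (h0 : ∀ (y : Fin k → Bool) (i : Fin k), y i = false → p ≤ ∑ l : Λ, μ y l * f i l)
    (h1 : ∀ (y : Fin k → Bool) (i : Fin k), y i = true → p ≤ ∑ l : Λ, μ y l * (1 - f i l)) :
    (k : ℝ) * (1 - binEntropy2 p) ≤ Real.logb 2 (Fintype.card Λ) := by
  have hsuccess (i : Fin k) : p ≤ avgSuccess μ (fun i l ↦ bitDist (f i l)) i :=
    le_avgSuccess fun y ↦ by cases hy : y i <;> simp [bitDist, h0, h1, hy]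
  simpa only [Fintype.card_bool, Nat.cast_ofNat, ← binEntropy2_eq_qaryEntropy_div_log,
    Finset.sum_const, Finset.card_univ, Fintype.card_fin, nsmul_eq_mul] using
    random_access_code_bound_general (fun y ↦ ⟨hμ0 y, hμ1 y⟩)
      (fun i l ↦ bitDist_mem_stdSimplex (hf i l)) (fun _ ↦ by simpa using hp.1) hsuccess
end

section
/- There exists a universal constant C > 0 such that the following holds. Let Λ be a finite nonempty set, M any set, and f : Λ × M → [0,1]. Let V be the class of functions M → [0,1] of the form g_q(E) = Σ_{λ∈Λ} q(λ)·f(λ,E), where q ranges over all probability distributions on Λ. Then for every γ ∈ (0, 1/2], every subset {E₁,…,E_k} ⊆ M that is γ-fat-shattered by V satisfies k ≤ C·log₂|Λ| / γ²; i.e., the γ-fat-shattering dimension of V is O(log₂|Λ| / γ²). -/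
/-- A finite family `E : Fin k → M` (a set `{E₁,…,E_k} ⊆ M` when `E` is injective) is
`γ`-fat-shattered by the function class `V` if there are reals `α₁,…,α_k` such that for
every `B ⊆ {1,…,k}` there is `g ∈ V` with `g(E_i) ≥ α_i + γ` for `i ∈ B` and
`g(E_i) ≤ α_i − γ` for `i ∉ B`. -/
def FatShatters {M : Type} (V : Set (M → ℝ)) (γ : ℝ) {k : ℕ} (E : Fin k → M) : Prop :=
  ∃ α : Fin k → ℝ, ∀ B : Finset (Fin k), ∃ g ∈ V,
    (∀ i ∈ B, α i + γ ≤ g (E i)) ∧ (∀ i ∉ B, g (E i) ≤ α i - γ)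

/-- The class of functions `M → [0,1]` induced by the preparations of an ontological model
with finite ontic space `Λ` and outcome probabilities `f : Λ × M → [0,1]`:  all functions
of the form `g_q(E) = Σ_λ q(λ)·f(λ,E)` with `q` a probability distribution on `Λ`. -/
def prepClass (Λ M : Type) [Fintype Λ] (f : Λ → M → ℝ) : Set (M → ℝ) :=
  {g | ∃ q : Λ → ℝ, (∀ l : Λ, 0 ≤ q l) ∧ (∑ l : Λ, q l = 1) ∧
    g = fun E => ∑ l : Λ, q l * f l E}

/-
A preparation class is contained in the convex hull of the `N = |Λ|` functions `f l`. If it shatters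
`E₁, …, E_k` with thresholds `α`, then for every sign pattern `B` the signed sum over `i` of
`g (E_i) - α i` is at least `k * γ` for some `g` in the hull. Being linear in `g`, this sum is
maximal at an extreme point, so already some `f l` attains it. By Massart's finite class lemma,
`N` vectors of squared length at most `s` can only reach the level `m` on all sign patterns if
`m ^ 2 ≤ 2 * s * log N`: average `exp (t * signed sum)` over all patterns, bound the maximum over
the vectors by their sum, and optimise over `t`. For values in `[0, 1]` one has `m = k * γ` and
`s = k`, hence `k * γ ^ 2 ≤ 2 * log N`.
-/

section SignedSum

variable {ι : Type*} [Fintype ι] [DecidableEq ι]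

/-- The sum of the coordinates of a vector with sign `+` on `B` and `-` off `B`, as a linear form;
`B` stands for a realisation of `|ι|` Rademacher signs. -/
noncomputable def signedSum (B : Finset ι) : (ι → ℝ) →ₗ[ℝ] ℝ :=
  ∑ i ∈ B, LinearMap.proj i - ∑ i ∈ Bᶜ, LinearMap.proj i

lemma signedSum_apply (B : Finset ι) (v : ι → ℝ) :
    signedSum B v = ∑ i ∈ B, v i - ∑ i ∈ Bᶜ, v i := by
  simp [signedSum]

lemma card_mul_le_signedSum {B : Finset ι} {v : ι → ℝ} {γ : ℝ}
    (hB : ∀ i ∈ B, γ ≤ v i) (hBc : ∀ i ∉ B, v i ≤ -γ) :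
    Fintype.card ι * γ ≤ signedSum B v := by
  have h_pos : B.card * γ ≤ ∑ i ∈ B, v i := by
    simpa only [nsmul_eq_mul] using B.card_nsmul_le_sum v γ hB
  have h_neg : ∑ i ∈ Bᶜ, v i ≤ Bᶜ.card * -γ := by
    simpa only [nsmul_eq_mul] using
      Bᶜ.sum_le_card_nsmul v (-γ) fun i hi => hBc i (Finset.mem_compl.mp hi)
  have h_card : (B.card : ℝ) + Bᶜ.card = Fintype.card ι := mod_cast B.card_add_card_compl
  rw [signedSum_apply, ← h_card]
  linarith

lemma sum_exp_signedSum (v : ι → ℝ) :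
    ∑ B : Finset ι, Real.exp (signedSum B v) = ∏ i, 2 * Real.cosh (v i) := by
  simp only [Real.cosh_eq, mul_div_cancel₀ _ (two_ne_zero' ℝ), Fintype.prod_add, ← Real.exp_sum,
    ← Real.exp_add, Finset.sum_neg_distrib, ← sub_eq_add_neg, signedSum_apply]

lemma sum_exp_signedSum_le (v : ι → ℝ) :
    ∑ B : Finset ι, Real.exp (signedSum B v)
      ≤ 2 ^ Fintype.card ι * Real.exp ((∑ i, v i ^ 2) / 2) := by
  calc ∑ B : Finset ι, Real.exp (signedSum B v)
      = ∏ i, 2 * Real.cosh (v i) := sum_exp_signedSum v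
    _ ≤ ∏ i, 2 * Real.exp (v i ^ 2 / 2) := by
        gcongr with i
        exact Real.cosh_le_exp_half_sq (v i)
    _ = 2 ^ Fintype.card ι * Real.exp ((∑ i, v i ^ 2) / 2) := by
        rw [Finset.prod_mul_distrib, Finset.prod_const, Finset.card_univ, ← Real.exp_sum,
          Finset.sum_div]

variable {Λ : Type*} [Fintype Λ] {c : Λ → ι → ℝ} {m s : ℝ}

lemma exp_le_card_mul_exp_of_forall_exists_le_signedSum
    (hc : ∀ l, ∑ i, c l i ^ 2 ≤ s) (hm : ∀ B, ∃ l, m ≤ signedSum B (c l)) :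
    Real.exp m ≤ Fintype.card Λ * Real.exp (s / 2) := by
  have h_pattern (B : Finset ι) : Real.exp m ≤ ∑ l, Real.exp (signedSum B (c l)) := by
    obtain ⟨l, hl⟩ := hm B
    exact (Real.exp_le_exp.mpr hl).trans <|
      Finset.single_le_sum (f := fun l => Real.exp (signedSum B (c l)))
        (fun _ _ => Real.exp_nonneg _) (Finset.mem_univ l)
  refine le_of_mul_le_mul_left ?_ (pow_pos (two_pos (α := ℝ)) (Fintype.card ι))
  calc 2 ^ Fintype.card ι * Real.exp m
      = ∑ _B : Finset ι, Real.exp m := by simp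
    _ ≤ ∑ B : Finset ι, ∑ l, Real.exp (signedSum B (c l)) :=
        Finset.sum_le_sum fun B _ => h_pattern B
    _ = ∑ l, ∑ B : Finset ι, Real.exp (signedSum B (c l)) := Finset.sum_comm
    _ ≤ ∑ _l : Λ, 2 ^ Fintype.card ι * Real.exp (s / 2) := by
        gcongr with l
        refine (sum_exp_signedSum_le (c l)).trans ?_
        gcongr
        exact hc l
    _ = 2 ^ Fintype.card ι * (Fintype.card Λ * Real.exp (s / 2)) := by
        rw [Finset.sum_const, Finset.card_univ, nsmul_eq_mul, mul_left_comm]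

lemma le_log_card_add_of_forall_exists_le_signedSum
    (hc : ∀ l, ∑ i, c l i ^ 2 ≤ s) (hm : ∀ B, ∃ l, m ≤ signedSum B (c l)) :
    m ≤ Real.log (Fintype.card Λ) + s / 2 := by
  have : Nonempty Λ := ⟨(hm ∅).choose⟩
  have h_card : (Fintype.card Λ : ℝ) ≠ 0 := Nat.cast_ne_zero.mpr Fintype.card_ne_zero
  rw [← Real.log_exp (s / 2), ← Real.log_mul h_card (Real.exp_ne_zero _),
    Real.le_log_iff_exp_le (by positivity)]
  exact exp_le_card_mul_exp_of_forall_exists_le_signedSum hc hm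

lemma sq_le_two_mul_log_card_of_forall_exists_le_signedSum (hm₀ : 0 ≤ m)
    (hc : ∀ l, ∑ i, c l i ^ 2 ≤ s) (hm : ∀ B, ∃ l, m ≤ signedSum B (c l)) :
    m ^ 2 ≤ 2 * s * Real.log (Fintype.card Λ) := by
  have hs : 0 ≤ s := (Finset.sum_nonneg fun _ _ => sq_nonneg _).trans (hc (hm ∅).choose)
  have h_quadratic (t : ℝ) : 0 ≤ s / 2 * (t * t) + -m * t + Real.log (Fintype.card Λ) := by
    rcases le_total 0 t with ht | ht
    · have h_scaled : t * m ≤ Real.log (Fintype.card Λ) + t ^ 2 * s / 2 := by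
        refine le_log_card_add_of_forall_exists_le_signedSum (c := fun l => t • c l)
          (fun l => ?_) (fun B => ?_)
        · simp only [Pi.smul_apply, smul_eq_mul, mul_pow, ← Finset.mul_sum]
          exact mul_le_mul_of_nonneg_left (hc l) (sq_nonneg t)
        · obtain ⟨l, hl⟩ := hm B
          exact ⟨l, by simpa only [map_smul, smul_eq_mul] using mul_le_mul_of_nonneg_left hl ht⟩
      linarith
    · have h_linear : 0 ≤ -m * t := mul_nonneg_of_nonpos_of_nonpos (neg_nonpos.mpr hm₀) ht
      have h_log := Real.log_natCast_nonneg (Fintype.card Λ)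
      have h_square := mul_nonneg (div_nonneg hs zero_le_two) (mul_self_nonneg t)
      linarith
  -- The discriminant does the work of the optimal `t = m / s`, and also covers `s = 0`.
  have h_discrim := discrim_le_zero h_quadratic
  rw [discrim] at h_discrim
  linarith

end SignedSum

section FatShatters

variable {M : Type} {k : ℕ} {E : Fin k → M} {γ a b : ℝ}

lemma FatShatters.mono {V W : Set (M → ℝ)} (hVW : V ⊆ W) (h : FatShatters V γ E) :
    FatShatters W γ E := by
  obtain ⟨α, hα⟩ := h
  exact ⟨α, fun B => let ⟨g, hg, hgα⟩ := hα B; ⟨g, hVW hg, hgα⟩⟩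

lemma prepClass_subset_convexHull_range {Λ : Type} [Fintype Λ] (f : Λ → M → ℝ) :
    prepClass Λ M f ⊆ convexHull ℝ (Set.range f) := by
  rintro _ ⟨q, hq, hq_sum, rfl⟩
  refine mem_convexHull_of_exists_fintype q f hq hq_sum Set.mem_range_self ?_
  ext e
  simp

lemma threshold_mem_Icc {V : Set (M → ℝ)} {α : Fin k → ℝ} (hγ : 0 ≤ γ)
    (hV : ∀ g ∈ V, ∀ e, g e ∈ Set.Icc a b)
    (hα : ∀ B : Finset (Fin k), ∃ g ∈ V,
      (∀ i ∈ B, α i + γ ≤ g (E i)) ∧ (∀ i ∉ B, g (E i) ≤ α i - γ)) (i : Fin k) :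
    α i ∈ Set.Icc a b := by
  obtain ⟨g, hg, -, h_le⟩ := hα ∅
  obtain ⟨g', hg', h_ge, -⟩ := hα Finset.univ
  have h_lower := h_le i (Finset.notMem_empty i)
  have h_upper := h_ge i (Finset.mem_univ i)
  constructor <;> linarith [(hV g hg (E i)).1, (hV g' hg' (E i)).2]

variable {Λ : Type*} {f : Λ → M → ℝ}

lemma apply_mem_Icc_of_mem_convexHull_range (hf : ∀ l e, f l e ∈ Set.Icc a b) {g : M → ℝ}
    (hg : g ∈ convexHull ℝ (Set.range f)) (e : M) : g e ∈ Set.Icc a b := by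
  have h_range : Set.range f ⊆ Set.Icc (fun _ => a) (fun _ => b) := by
    rintro _ ⟨l, rfl⟩
    exact ⟨fun e => (hf l e).1, fun e => (hf l e).2⟩
  have hg_Icc := convexHull_min h_range (convex_Icc _ _) hg
  exact ⟨hg_Icc.1 e, hg_Icc.2 e⟩

lemma exists_le_signedSum_of_mem_convexHull_range {α : Fin k → ℝ} {B : Finset (Fin k)}
    {g : M → ℝ} (hg : g ∈ convexHull ℝ (Set.range f))
    (hB : ∀ i ∈ B, α i + γ ≤ g (E i)) (hBc : ∀ i ∉ B, g (E i) ≤ α i - γ) :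
    ∃ l, k * γ ≤ signedSum B (f l ∘ E - α) := by
  have h_convex : ConvexOn ℝ Set.univ (signedSum B ∘ₗ LinearMap.funLeft ℝ ℝ E) :=
    LinearMap.convexOn _ convex_univ
  obtain ⟨_, ⟨l, rfl⟩, hl⟩ := h_convex.exists_ge_of_mem_convexHull (Set.subset_univ _) hg
  have h_extreme : signedSum B (g ∘ E) ≤ signedSum B (f l ∘ E) := hl
  have h_margin : Fintype.card (Fin k) * γ ≤ signedSum B (g ∘ E - α) :=
    card_mul_le_signedSum (fun i hi => le_sub_iff_add_le'.mpr (hB i hi))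
      (fun i hi => by simpa [sub_le_iff_le_add, add_comm, sub_eq_add_neg] using hBc i hi)
  refine ⟨l, ?_⟩
  rw [Fintype.card_fin, map_sub] at h_margin
  rw [map_sub]
  linarith

variable [Fintype Λ]

theorem FatShatters.mul_sq_le_log_card_of_convexHull_range (hγ : 0 ≤ γ)
    (hf : ∀ l e, f l e ∈ Set.Icc a b) (h : FatShatters (convexHull ℝ (Set.range f)) γ E) :
    k * γ ^ 2 ≤ 2 * (b - a) ^ 2 * Real.log (Fintype.card Λ) := by
  obtain ⟨α, hα⟩ := h
  have hα_mem := threshold_mem_Icc hγ (fun _ => apply_mem_Icc_of_mem_convexHull_range hf) hα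
  have h_sq (l : Λ) : ∑ i, (f l ∘ E - α) i ^ 2 ≤ k * (b - a) ^ 2 := by
    have h_dev (i : Fin k) : (f l (E i) - α i) ^ 2 ≤ (b - a) ^ 2 :=
      sq_le_sq' (by linarith [(hf l (E i)).1, (hα_mem i).2])
        (by linarith [(hf l (E i)).2, (hα_mem i).1])
    simpa using Finset.univ.sum_le_card_nsmul _ _ fun i _ => h_dev i
  have h_massart : (k * γ) ^ 2 ≤ 2 * (k * (b - a) ^ 2) * Real.log (Fintype.card Λ) :=
    sq_le_two_mul_log_card_of_forall_exists_le_signedSum (by positivity) h_sq fun B =>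
      let ⟨_, hg, hB, hBc⟩ := hα B
      exists_le_signedSum_of_mem_convexHull_range hg hB hBc
  rcases k.eq_zero_or_pos with rfl | hk
  · simpa using mul_nonneg (by positivity) (Real.log_natCast_nonneg (Fintype.card Λ))
  · refine le_of_mul_le_mul_left ?_ (Nat.cast_pos (α := ℝ).mpr hk)
    linarith

end FatShatters

lemma log_natCast_le_logb_two (n : ℕ) : Real.log n ≤ Real.logb 2 n :=
  le_div_self (Real.log_natCast_nonneg n) (Real.log_pos one_lt_two)
    (Real.log_two_lt_d9.le.trans (by norm_num))

theorem fat_shattering_dimension_of_preparations_general {Λ M : Type} [Fintype Λ]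
    {f : Λ → M → ℝ} {a b γ : ℝ} (hf : ∀ l e, f l e ∈ Set.Icc a b) (hγ : 0 < γ)
    {k : ℕ} {E : Fin k → M} (h : FatShatters (prepClass Λ M f) γ E) :
    (k : ℝ) ≤ 2 * (b - a) ^ 2 * Real.logb 2 (Fintype.card Λ) / γ ^ 2 := by
  rw [le_div_iff₀ (by positivity)]
  calc k * γ ^ 2 ≤ 2 * (b - a) ^ 2 * Real.log (Fintype.card Λ) :=
        (h.mono (prepClass_subset_convexHull_range f)).mul_sq_le_log_card_of_convexHull_range
          hγ.le hf
    _ ≤ 2 * (b - a) ^ 2 * Real.logb 2 (Fintype.card Λ) := by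
        gcongr
        exact log_natCast_le_logb_two _

/-- **Fat-shattering dimension of preparations of an efficient ontological model.**
There is a universal constant `C > 0` such that: for every finite nonempty ontic space
`Λ`, any set of measurements `M`, and `f : Λ × M → [0,1]`, every `γ ∈ (0, 1/2]` and every
subset `{E₁,…,E_k} ⊆ M` that is `γ`-fat-shattered by the class of preparation functions
satisfies `k ≤ C·log₂|Λ|/γ²`. -/
theorem fat_shattering_dimension_of_preparations :
    ∃ C : ℝ, 0 < C ∧
      ∀ (Λ : Type) (_ : Fintype Λ), Nonempty Λ →
      ∀ (M : Type) (f : Λ → M → ℝ),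
        (∀ (l : Λ) (E : M), f l E ∈ Set.Icc (0 : ℝ) 1) →
      ∀ γ : ℝ, γ ∈ Set.Ioc (0 : ℝ) (1 / 2) →
      ∀ (k : ℕ) (E : Fin k → M), Function.Injective E →
        FatShatters (prepClass Λ M f) γ E →
        (k : ℝ) ≤ C * Real.logb 2 (Fintype.card Λ) / γ ^ 2 :=
  ⟨2, two_pos, fun _ _ _ _ _ hf _ hγ _ _ _ h => by
    simpa using fat_shattering_dimension_of_preparations_general hf hγ.1 h⟩
end

section
/- Let n ≥ 2 and L ≥ 1 be natural numbers and let ψ : ({0,1})^n → ℂ be an n-qubit state vector (an arbitrary function on bit strings of length n). For each cut j ∈ {1,…,n−1}, let M_j be the 2^j × 2^{n−j} complex matrix (matricization) defined by M_j((x₁,…,x_j),(x_{j+1},…,x_n)) = ψ(x₁,…,x_n). Suppose rank(M_j) ≤ L for every j (i.e. ψ is L-entangled across every contiguous bipartition). Then ψ admits a matrix-product (tree-like Schmidt) representation with bond dimension L: there exist functions a₁ : {0,1} × {1,…,L} → ℂ, a_j : {0,1} × {1,…,L} × {1,…,L} → ℂ for 2 ≤ j ≤ n−1, and a_n : {0,1}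 × {1,…,L} → ℂ, such that for every (x₁,…,x_n) ∈ {0,1}^n, ψ(x₁,…,x_n) = Σ_{j₁,…,j_{n−1} ∈ {1,…,L}} a₁(x₁, j₁) · a₂(x₂, j₁, j₂) ⋯ a_{n−1}(x_{n−1}, j_{n−2}, j_{n−1}) · a_n(x_n, j_{n−1}). -/
/-- The matricization of an `n`-qubit state vector `ψ : {0,1}^n → ℂ` across the cut
`(1,…,j | j+1,…,n)`: the `2^j × 2^{n−j}` matrix with
`M_j((x₁,…,x_j),(x_{j+1},…,x_n)) = ψ(x₁,…,x_n)`.  Its rank is the Schmidt rank of `ψ`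
across that bipartition. -/
noncomputable def matricize {n : ℕ} (ψ : (Fin n → Bool) → ℂ) (j : ℕ) (hj : j ≤ n) :
    Matrix (Fin j → Bool) (Fin (n - j) → Bool) ℂ :=
  Matrix.of fun u v => ψ fun i =>
    if h : (i : ℕ) < j then u ⟨(i : ℕ), h⟩
    else v ⟨(i : ℕ) - j, by have := i.isLt; omega⟩

/-!
If `M_j` has rank at most `L`, then it factors through `K^L` as `M_j = M_j C_j B_j`, which attaches
to every prefix `u` of length `j` a vector `P_j(u)`, the row `u` of `P_j = M_j C_j`, with
`M_j = P_j B_j`.  The row of `M_{j+1}` at the extended prefix `ub` is the part of the row of `M_j`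
at `u` in the columns whose index begins with `b`; hence `P_{j+1}(ub) = P_j(u) F_j(b)` for a matrix
`F_j(b)` that does not depend on `u`.  Iterating from `P_1` to `P_{n-1}` and expanding the products
of transfer matrices as sums over paths of bond indices gives the representation.
-/

open scoped Matrix

section Algebra

variable {R κ : Type*} [CommSemiring R] [Fintype κ]

theorem exists_mul_mul_eq_of_rank_le_card {K m n : Type*} [Field K] [Fintype n]
    {M : Matrix m n K} (hM : M.rank ≤ Fintype.card κ) :
    ∃ (C : Matrix n κ K) (B : Matrix κ n K), M * C * B = M := by
  classical
  let f := M.mulVecLin.rangeRestrict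
  obtain ⟨s, hs⟩ := f.exists_rightInverse_of_surjective M.mulVecLin.range_rangeRestrict
  have hdim : Module.finrank K M.mulVecLin.range ≤ Module.finrank K (κ → K) :=
    hM.trans_eq (Module.finrank_fintype_fun_eq_card K).symm
  obtain ⟨ι, hι⟩ := finrank_le_iff_exists_linearMap.1 hdim
  obtain ⟨p, hp⟩ := ι.exists_leftInverse_of_injective (LinearMap.ker_eq_bot.2 hι)
  have hfactor : f ∘ₗ (s ∘ₗ p) ∘ₗ ι ∘ₗ f = f := by
    rw [LinearMap.comp_assoc, ← LinearMap.comp_assoc f ι p, hp, LinearMap.id_comp,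
      ← LinearMap.comp_assoc, hs, LinearMap.id_comp]
  refine ⟨LinearMap.toMatrix' (s ∘ₗ p), LinearMap.toMatrix' (ι ∘ₗ f), ?_⟩
  refine Matrix.ext_of_mulVec_single fun i => ?_
  simp only [← Matrix.mulVec_mulVec, LinearMap.toMatrix'_mulVec]
  exact congrArg Subtype.val (LinearMap.congr_fun hfactor (Pi.single i 1))

theorem dotProduct_eq_sum_paths {m : ℕ} (v : Fin (m + 1) → κ → R) (F : Fin m → Matrix κ κ R)
    (hv : ∀ t, v t.succ = v t.castSucc ᵥ* F t) (g : κ → R) :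
    v (Fin.last m) ⬝ᵥ g = ∑ j : Fin (m + 1) → κ,
      v 0 (j 0) * (∏ t, F t (j t.castSucc) (j t.succ)) * g (j (Fin.last m)) := by
  induction m with
  | zero =>
    simp [dotProduct, ← (Equiv.funUnique (Fin 1) κ).symm.sum_comp]
  | succ m ih =>
    have hv₁ (k : κ) : v 1 k = ∑ i, v 0 i * F 0 i k := congrFun (hv 0) k
    rw [← Fin.succ_last, ih (fun t => v t.succ) (fun t => F t.succ) fun t => hv t.succ,
      ← (Fin.consEquiv fun _ : Fin (m + 2) => κ).sum_comp, Fintype.sum_prod_type, Finset.sum_comm]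
    refine Finset.sum_congr rfl fun j _ => ?_
    simp [Fin.consEquiv, hv₁, Finset.sum_mul, Fin.prod_univ_succ, mul_assoc]

theorem prod_dite_interior {M : Type*} [CommMonoid M] {m : ℕ}
    (f : ∀ t : Fin (m + 2), 1 ≤ (t : ℕ) ∧ (t : ℕ) < m + 1 → M) :
    (∏ t : Fin (m + 2), if h : 1 ≤ (t : ℕ) ∧ (t : ℕ) < m + 1 then f t h else 1) =
      ∏ t : Fin m, f t.castSucc.succ (by simp) := by
  rw [Fin.prod_univ_succ, Fin.prod_univ_castSucc]
  simp

end Algebra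

section Cut

variable {R α κ : Type*} {j k l n : ℕ}

/-- The matricization of a tensor `ψ` with `n` legs across the cut `(1,…,j | j+1,…,n)`, over
arbitrary alphabets and scalars.  The number `k` of legs to the right of the cut is a parameter
of its own, so that no subtraction occurs in the types. -/
def cutMatrix (h : j + k = n) (ψ : (Fin n → α) → R) : Matrix (Fin j → α) (Fin k → α) R :=
  Matrix.of fun u v => ψ (Fin.append u v ∘ Fin.cast h.symm)

theorem cutMatrix_snoc (h : j + 1 + k = n) (h' : j + (k + 1) = n) (ψ : (Fin n → α) → R)
    (u : Fin j → α) (b : α) (v : Fin k → α) :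
    cutMatrix h ψ (Fin.snoc u b) v = cutMatrix h' ψ u (Fin.cons b v) := by
  simp only [cutMatrix, Matrix.of_apply, Fin.append_left_snoc]
  rfl

theorem rank_cutMatrix_eq_rank_matricize (h : j + k = n) (ψ : (Fin n → Bool) → ℂ) :
    (cutMatrix h ψ).rank = (matricize ψ j (by omega)).rank := by
  obtain rfl : k = n - j := by omega
  congr 1
  ext u v
  simp only [cutMatrix, matricize, Matrix.of_apply]
  congr 1
  funext i
  simp [Fin.append, Fin.addCases, Fin.castLT, Fin.subNat]

variable [Semiring R] [Fintype κ]

theorem exists_transfer_of_cutMatrix_eq_mul [Fintype α] {ψ : (Fin n → α) → R}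
    (h : j + k = n) (h' : j + 1 + l = n) {P : Matrix (Fin j → α) κ R}
    {B : Matrix κ (Fin k → α) R} (hPB : cutMatrix h ψ = P * B) (C : Matrix (Fin l → α) κ R) :
    ∃ F : α → Matrix κ κ R, ∀ u b, (cutMatrix h' ψ * C) (Fin.snoc u b) = P u ᵥ* F b := by
  obtain rfl : k = l + 1 := by omega
  refine ⟨fun b => B.submatrix id (Fin.cons b) * C, fun u b => ?_⟩
  have hrow : cutMatrix h' ψ (Fin.snoc u b) = P u ᵥ* B.submatrix id (Fin.cons b) := by
    funext v
    rw [cutMatrix_snoc h' h, hPB]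
    rfl
  rw [Matrix.mul_apply_eq_vecMul, hrow, Matrix.vecMul_vecMul]

theorem exists_boundary_of_cutMatrix_eq_mul {ψ : (Fin (j + 1) → α) → R} (h : j + k = j + 1)
    {P : Matrix (Fin j → α) κ R} {B : Matrix κ (Fin k → α) R} (hPB : cutMatrix h ψ = P * B) :
    ∃ c : α → κ → R, ∀ u b, ψ (Fin.snoc u b) = P u ⬝ᵥ c b := by
  obtain rfl : k = 1 := by omega
  refine ⟨fun b i => B i fun _ => b, fun u b => ?_⟩
  have hcut : cutMatrix h ψ u (fun _ => b) = ψ (Fin.snoc u b) :=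
    congrArg ψ (Fin.append_right_eq_snoc u fun _ => b)
  rw [← hcut, hPB]
  rfl

end Cut

section MatrixProduct

variable {K α κ : Type*} [Field K] [Fintype α] [Fintype κ]

theorem exists_prefix_vectors_of_rank_cutMatrix_le {m : ℕ} (ψ : (Fin (m + 2) → α) → K)
    (hψ : ∀ j k (h : j + k = m + 2), 0 < j → 0 < k → (cutMatrix h ψ).rank ≤ Fintype.card κ) :
    ∃ (P : ∀ t : Fin (m + 1), Matrix (Fin (t + 1) → α) κ K) (F : Fin m → α → Matrix κ κ K)
      (c : α → κ → K),
      (∀ t u b, P t.succ (Fin.snoc u b) = P t.castSucc u ᵥ* F t b) ∧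
        ∀ u b, ψ (Fin.snoc u b) = P (Fin.last m) u ⬝ᵥ c b := by
  have hcut (t : Fin (m + 1)) : (t + 1 : ℕ) + (m + 1 - t) = m + 2 := by omega
  choose C B hCB using fun t => exists_mul_mul_eq_of_rank_le_card (κ := κ)
    (hψ _ _ (hcut t) (by omega) (by omega))
  choose F hF using fun t : Fin m =>
    exists_transfer_of_cutMatrix_eq_mul _ (hcut t.succ) (hCB t.castSucc).symm (C t.succ)
  obtain ⟨c, hc⟩ := exists_boundary_of_cutMatrix_eq_mul _ (hCB (Fin.last m)).symm
  exact ⟨fun t => cutMatrix (hcut t) ψ * C t, F, c, hF, hc⟩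

theorem matrix_product_representation_of_L_entangled_general (n L : ℕ) (hn : 2 ≤ n)
    (ψ : (Fin n → α) → K)
    (hψ : ∀ j k (h : j + k = n), 0 < j → 0 < k → (cutMatrix h ψ).rank ≤ L) :
    ∃ (afirst : α → Fin L → K) (amid : Fin n → α → Fin L → Fin L → K) (alast : α → Fin L → K),
      ∀ x : Fin n → α,
        ψ x =
          ∑ j : Fin (n - 1) → Fin L,
            afirst (x ⟨0, by omega⟩) (j ⟨0, by omega⟩) *
            (∏ t : Fin n,
              if h : 1 ≤ (t : ℕ) ∧ (t : ℕ) < n - 1 then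
                amid t (x t) (j ⟨(t : ℕ) - 1, by omega⟩) (j ⟨(t : ℕ), by omega⟩)
              else 1) *
            alast (x ⟨n - 1, by omega⟩) (j ⟨n - 2, by omega⟩) := by
  obtain ⟨m, rfl⟩ : ∃ m, n = m + 2 := ⟨n - 2, by omega⟩
  obtain ⟨P, F, c, hP, hc⟩ := exists_prefix_vectors_of_rank_cutMatrix_le (κ := Fin L) ψ
    (by simpa only [Fintype.card_fin] using hψ)
  obtain ⟨amid, hamid⟩ : ∃ amid : Fin (m + 2) → α → Fin L → Fin L → K,
      ∀ t : Fin m, amid t.castSucc.succ = F t :=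
    ⟨_, ((Fin.succ_injective _).comp (Fin.castSucc_injective m)).extend_apply F 0⟩
  refine ⟨fun b => P 0 fun _ => b, amid, c, fun x => ?_⟩
  let v (t : Fin (m + 1)) : Fin L → K := P t (Fin.take (t + 1) (by omega) x)
  have hv (t : Fin m) : v t.succ = v t.castSucc ᵥ* F t (x t.castSucc.succ) := by
    rw [← hP]
    exact congrArg (P t.succ) (Fin.take_succ_eq_snoc (t + 1) (by omega) x)
  have hfirst : v 0 = P 0 fun _ => x 0 :=
    congrArg (P 0) (funext (Fin.forall_fin_one.2 rfl))
  have hlast : ψ x = v (Fin.last m) ⬝ᵥ c (x (Fin.last (m + 1))) := by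
    rw [← hc]
    exact congrArg ψ (Fin.take_succ_eq_snoc (m + 1) (by omega) x)
  rw [hlast, dotProduct_eq_sum_paths v _ hv, hfirst]
  refine Finset.sum_congr rfl fun j _ => ?_
  simp only [← hamid]
  congr 2
  exact (prod_dite_interior fun t _ =>
    amid t (x t) (j ⟨t - 1, by omega⟩) (j ⟨t, by omega⟩)).symm

end MatrixProduct

/-- **Matrix-product representation of slightly entangled states** (Vidal/Jozsa, Eq. (4)
of the paper).  Let `n ≥ 2`, `L ≥ 1`, and let `ψ : {0,1}^n → ℂ` be an `n`-qubit state
vector whose Schmidt rank across every contiguous bipartition `(1,…,j | j+1,…,n)` is at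
most `L`.  Then `ψ` admits a matrix-product representation with bond dimension `L`:
there are tensors `a₁(x₁, j₁)`, `a_t(x_t, j_{t−1}, j_t)` for `2 ≤ t ≤ n−1`, and
`a_n(x_n, j_{n−1})` with
`ψ(x₁,…,x_n) = Σ_{j₁,…,j_{n−1}} a₁(x₁,j₁)·a₂(x₂,j₁,j₂)⋯a_{n−1}(x_{n−1},j_{n−2},j_{n−1})·a_n(x_n,j_{n−1})`. -/
theorem matrix_product_representation_of_L_entangled
    (n L : ℕ) (hn : 2 ≤ n) (hL : 1 ≤ L)
    (ψ : (Fin n → Bool) → ℂ)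
    (hrank : ∀ (j : ℕ) (_ : 1 ≤ j) (hjn : j < n), (matricize ψ j hjn.le).rank ≤ L) :
    ∃ (afirst : Bool → Fin L → ℂ)
      (amid : Fin n → Bool → Fin L → Fin L → ℂ)
      (alast : Bool → Fin L → ℂ),
      ∀ x : Fin n → Bool,
        ψ x =
          ∑ j : Fin (n - 1) → Fin L,
            afirst (x ⟨0, by omega⟩) (j ⟨0, by omega⟩) *
            (∏ t : Fin n,
              if h : 1 ≤ (t : ℕ) ∧ (t : ℕ) < n - 1 then
                amid t (x t) (j ⟨(t : ℕ) - 1, by omega⟩) (j ⟨(t : ℕ), by omega⟩)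
              else 1) *
            alast (x ⟨n - 1, by omega⟩) (j ⟨n - 2, by omega⟩) := by
  exact matrix_product_representation_of_L_entangled_general n L hn ψ fun j _ h hj _ =>
    (rank_cutMatrix_eq_rank_matricize h ψ).trans_le (hrank j hj (by omega))
end
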